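/- Let (G, I) be a single-interval total-sum game, where I ⊆ ℝ is a (possibly unbounded) interval. If Eve has a winning strategy (a strategy such that every consistent play π satisfies Total(π) ∈ I) then she has a finite-memory winning strategy, i.e., a winning strategy computed by a finite-state machine. -/

import Mathlib

/-!
The game is viewed on configurations `(v, c)`: a vertex together with the sum of the weights so
far. Since all partial sums are integers, `Total(π) ∈ I` means that the sums are eventually at
least some integer lying above a point of `I`, and infinitely often at most some integer lying
below a point of `I` (`liminf_mem_iff`). Eve's strategies are presented as systems of states
(`Sim`), and a configuration is *good* if Eve wins from it with finitely many states. A machine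
can be read off a finite winning system (`eveWinsFM_of_good`), and the histories consistent with
a winning strategy form a winning system (`good_init_of_eveWins`), so it suffices that every
configuration of a winning system is good (`good_of_winning`).

The winning condition is prefix independent, so a finite winning system with good exits consists
of good configurations (`good_of_sim`). Suppose that some configuration of a winning system is
not good. A Baire category argument on the runs among non-good configurations yields a *trap*
(`exists_trap`): a winning system of non-good configurations with good exits, all of whose sums
are at least one admissible lower bound `a`. A finite system playing inside the trap gives the
contradiction.

* If `I` is bounded above, let `b` be the greatest admissible upper bound. The trap has finitely
  many configurations with sum at most `b`, and Eve can force a return to them, or a good exit,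
  within a bounded number of moves. Only finitely many configurations occur in this way
  (`Trap.false_of_max`).
* If `I` is unbounded above, raising the sum preserves goodness. Among the vertices that carry
  no good configuration, Adam cannot force arbitrarily large gains, since otherwise he could
  repeat this and make the sums of a run of the trap tend to infinity (`Trap.exists_not_climb`).
  Hence Eve can keep the sums bounded: at large sums she prevents gains beyond a constant, at
  small sums she follows the trap (`Trap.false_of_univ`).
-/

open Filter

/-- A game graph: vertex set `V`, Eve's vertices `Eve`, edge relation `E` (every vertex
has a successor), integer weight function `w`, and initial vertex `init`. -/
structure GameGraph (V : Type) where
  Eve : Set V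
  E : V → V → Prop
  w : V → V → ℤ
  init : V
  succ : ∀ v, ∃ u, E v u

namespace GameGraph

variable {V : Type}

/-- `π` is a play starting at vertex `v`. -/
def IsPlayFrom (G : GameGraph V) (v : V) (π : ℕ → V) : Prop :=
  π 0 = v ∧ ∀ i, G.E (π i) (π (i + 1))

/-- `π` is a play (from the initial vertex). -/
def IsPlay (G : GameGraph V) (π : ℕ → V) : Prop :=
  G.IsPlayFrom G.init π

/-- The prefix `π 0, …, π i` of a play, as a list. -/
def prefixList (π : ℕ → V) (i : ℕ) : List V :=
  List.ofFn (fun j : Fin (i + 1) => π j)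

/-- A (history-based) strategy for Eve is legal if it always proposes a successor
of the current (Eve) vertex. -/
def EveLegal (G : GameGraph V) (σ : List V → V) : Prop :=
  ∀ (l : List V) (v : V), v ∈ G.Eve → G.E v (σ (l ++ [v]))

/-- A (history-based) strategy for Adam is legal if it always proposes a successor
of the current (Adam) vertex. -/
def AdamLegal (G : GameGraph V) (σ : List V → V) : Prop :=
  ∀ (l : List V) (v : V), v ∉ G.Eve → G.E v (σ (l ++ [v]))

/-- The play `π` is consistent with Eve's strategy `σ`. -/
def ConsEve (G : GameGraph V) (σ : List V → V) (π : ℕ → V) : Prop :=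
  ∀ i, π i ∈ G.Eve → π (i + 1) = σ (prefixList π i)

/-- The play `π` is consistent with Adam's strategy `σ`. -/
def ConsAdam (G : GameGraph V) (σ : List V → V) (π : ℕ → V) : Prop :=
  ∀ i, π i ∉ G.Eve → π (i + 1) = σ (prefixList π i)

/-- Eve has a winning strategy for the objective `Win`. -/
def EveWins (G : GameGraph V) (Win : (ℕ → V) → Prop) : Prop :=
  ∃ σ : List V → V, G.EveLegal σ ∧ ∀ π, G.IsPlay π → G.ConsEve σ π → Win π

/-- Adam has a winning strategy: he can ensure the objective `Win` of Eve fails. -/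
def AdamWins (G : GameGraph V) (Win : (ℕ → V) → Prop) : Prop :=
  ∃ σ : List V → V, G.AdamLegal σ ∧ ∀ π, G.IsPlay π → G.ConsAdam σ π → ¬ Win π

/-- Consistency with a positional Eve strategy. -/
def ConsEvePos (G : GameGraph V) (f : V → V) (π : ℕ → V) : Prop :=
  ∀ i, π i ∈ G.Eve → π (i + 1) = f (π i)

/-- Consistency with a positional Adam strategy. -/
def ConsAdamPos (G : GameGraph V) (f : V → V) (π : ℕ → V) : Prop :=
  ∀ i, π i ∉ G.Eve → π (i + 1) = f (π i)

/-- Eve has a positional (memoryless) winning strategy. -/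
def EveWinsPos (G : GameGraph V) (Win : (ℕ → V) → Prop) : Prop :=
  ∃ f : V → V, (∀ v ∈ G.Eve, G.E v (f v)) ∧
    ∀ π, G.IsPlay π → G.ConsEvePos f π → Win π

/-- Adam has a positional (memoryless) winning strategy. -/
def AdamWinsPos (G : GameGraph V) (Win : (ℕ → V) → Prop) : Prop :=
  ∃ f : V → V, (∀ v, v ∉ G.Eve → G.E v (f v)) ∧
    ∀ π, G.IsPlay π → G.ConsAdamPos f π → ¬ Win π

/-- The run of the memory structure `(δ, m)` of a finite-state machine while
reading the play `π`: after `i` steps it has read `π 0, …, π (i-1)`. -/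
def memRun {M : Type} (δ : M → V → M) (m : M) (π : ℕ → V) : ℕ → M
  | 0 => m
  | i + 1 => δ (memRun δ m π i) (π i)

/-- Consistency of a play with the finite-memory strategy given by the machine
`(m0, δ, o)`: at step `i`, the machine has memory `memRun δ m0 π i` (having read
`π 0, …, π (i-1)`) and outputs the move `o (memRun δ m0 π i) (π i)`. -/
def ConsEveFM (G : GameGraph V) {M : Type} (m0 : M) (δ : M → V → M)
    (o : M → V → V) (π : ℕ → V) : Prop :=
  ∀ i, π i ∈ G.Eve → π (i + 1) = o (memRun δ m0 π i) (π i)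

/-- Eve has a finite-memory winning strategy, i.e. one computed by a
finite-state machine. -/
def EveWinsFM (G : GameGraph V) (Win : (ℕ → V) → Prop) : Prop :=
  ∃ (M : Type) (_ : Fintype M) (m0 : M) (δ : M → V → M) (o : M → V → V),
    (∀ m, ∀ v ∈ G.Eve, G.E v (o m v)) ∧
    ∀ π, G.IsPlay π → G.ConsEveFM m0 δ o π → Win π

/-- The total weight `w(π[..k])` of the length-`k` prefix of a play. -/
def partialSum (G : GameGraph V) (π : ℕ → V) (k : ℕ) : ℤ :=
  ∑ i ∈ Finset.range k, G.w (π i) (π (i + 1))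

/-- The (liminf) mean-payoff of a play. -/
noncomputable def MP (G : GameGraph V) (π : ℕ → V) : ℝ :=
  liminf (fun k => (G.partialSum π k : ℝ) / (k : ℝ)) atTop

/-- The liminf payoff of a play, in the extended reals. -/
noncomputable def liminfPayoff (G : GameGraph V) (π : ℕ → V) : EReal :=
  liminf (fun i => ((G.w (π i) (π (i + 1)) : ℝ) : EReal)) atTop

/-- The total-sum payoff of a play, in the extended reals. -/
noncomputable def totalPayoff (G : GameGraph V) (π : ℕ → V) : EReal :=
  liminf (fun k => ((G.partialSum π k : ℝ) : EReal)) atTop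

/-- The discounted sum of a play, with discount factor `lam`. -/
noncomputable def DS (G : GameGraph V) (lam : ℝ) (π : ℕ → V) : ℝ :=
  ∑' i : ℕ, lam ^ i * (G.w (π i) (π (i + 1)) : ℝ)

/-- A play of a (min-)parity game is winning for Eve iff the minimal priority
occurring infinitely often is even. -/
def ParityWin (Ω : V → ℕ) (π : ℕ → V) : Prop :=
  ∃ p, Even p ∧ (∀ N, ∃ k, N ≤ k ∧ Ω (π k) = p) ∧
    ∀ q, (∀ N, ∃ k, N ≤ k ∧ Ω (π k) = q) → p ≤ q

end GameGraph

namespace GameGraph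

variable {V : Type}

/-! ### Configurations, winning sequences and simulations -/

/-- The moves of the game on configurations `(v, c)`, where `c` is the sum of the weights
accumulated so far. -/
def Step (G : GameGraph V) (p q : V × ℤ) : Prop :=
  G.E p.1 q.1 ∧ q.2 = p.2 + G.w p.1 q.1

/-- The interval condition on a sequence of partial sums, in terms of the integers `Lo` lying
above some point of the interval and the integers `Hi` lying below some point of it. -/
def WinSeq (Lo Hi : Set ℤ) (c : ℕ → ℤ) : Prop :=
  ∃ a ∈ Lo, ∃ b ∈ Hi, (∃ N, ∀ k, N ≤ k → a ≤ c k) ∧ ∀ N, ∃ k, N ≤ k ∧ c k ≤ b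

/-- A strategy of Eve presented as a system of states: each state `x` sits at a configuration
`val x`, and `nx` relates it to its possible next states. Eve has some move, and every move of
Adam is answered; moves into the target set `T` leave the system. -/
structure Sim (G : GameGraph V) (T : Set (V × ℤ)) {X : Type} (val : X → V × ℤ)
    (nx : X → X → Prop) : Prop where
  step : ∀ x y, nx x y → G.Step (val x) (val y)
  eve : ∀ x, (val x).1 ∈ G.Eve → (∃ y, nx x y) ∨ ∃ q ∈ T, G.Step (val x) q
  adam : ∀ x, (val x).1 ∉ G.Eve → ∀ q, G.Step (val x) q → q ∈ T ∨ ∃ y, nx x y ∧ val y = q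

/-- Every infinite run of the system, from whatever state, is winning. -/
def ChainsWin (Lo Hi : Set ℤ) {X : Type} (val : X → V × ℤ) (nx : X → X → Prop) : Prop :=
  ∀ s : ℕ → X, (∀ i, nx (s i) (s (i + 1))) → WinSeq Lo Hi (fun i => (val (s i)).2)

/-- Configurations from which Eve wins with finitely many states. -/
def Good (G : GameGraph V) (Lo Hi : Set ℤ) (p : V × ℤ) : Prop :=
  ∃ (X : Type) (_ : Finite X) (val : X → V × ℤ) (nx : X → X → Prop),
    G.Sim ∅ val nx ∧ ChainsWin Lo Hi val nx ∧ ∃ x, val x = p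

theorem WinSeq.of_tail {Lo Hi : Set ℤ} {c : ℕ → ℤ} (m : ℕ)
    (h : WinSeq Lo Hi (fun k => c (m + k))) : WinSeq Lo Hi c := by
  obtain ⟨a, ha, b, hb, ⟨N, hN⟩, h2⟩ := h
  refine ⟨a, ha, b, hb, ⟨m + N, fun k hk => ?_⟩, fun N => ?_⟩
  · have : a ≤ c (m + (k - m)) := hN (k - m) (by omega)
    rwa [show m + (k - m) = k by omega] at this
  · obtain ⟨k, hk, hk'⟩ := h2 N
    exact ⟨m + k, by omega, hk'⟩

theorem WinSeq.tail {Lo Hi : Set ℤ} {c : ℕ → ℤ} (m : ℕ)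
    (h : WinSeq Lo Hi c) : WinSeq Lo Hi (fun k => c (m + k)) := by
  obtain ⟨a, ha, b, hb, ⟨N, hN⟩, h2⟩ := h
  refine ⟨a, ha, b, hb, ⟨N, fun k hk => hN _ (by omega)⟩, fun N => ?_⟩
  obtain ⟨k, hk, hk'⟩ := h2 (m + N)
  exact ⟨k - m, by omega, by simpa only [show m + (k - m) = k by omega] using hk'⟩

theorem exists_chain {X : Type} {r : X → X → Prop} (h : ∀ x, ∃ y, r x y) (x₀ : X) :
    ∃ s : ℕ → X, s 0 = x₀ ∧ ∀ i, r (s i) (s (i + 1)) := by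
  choose f hf using h
  exact ⟨fun n => f^[n] x₀, rfl, fun i => by
    simp only [Function.iterate_succ_apply']; exact hf _⟩

theorem exists_uniform {ι α : Type} [Finite ι] [LinearOrder α] [Nonempty α]
    {Pr : ι → α → Prop}
    (mono : ∀ i m n, m ≤ n → Pr i m → Pr i n) (h : ∀ i, ∃ n, Pr i n) : ∃ N, ∀ i, Pr i N := by
  choose f hf using h
  obtain ⟨N, hN⟩ := (Set.finite_range f).bddAbove
  exact ⟨N, fun i => mono i _ _ (hN ⟨i, rfl⟩) (hf i)⟩

theorem exists_weight_bound [Finite V] (G : GameGraph V) :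
    ∃ W : ℤ, 0 ≤ W ∧ ∀ u v, |G.w u v| ≤ W := by
  obtain ⟨W, hW⟩ := exists_uniform (ι := V × V) (α := ℤ) (Pr := fun p n => |G.w p.1 p.2| ≤ n)
    (fun _ _ _ h h' => h'.trans h) (fun p => ⟨_, le_rfl⟩)
  exact ⟨W, (abs_nonneg _).trans (hW (G.init, G.init)), fun u v => hW (u, v)⟩

theorem finite_step [Finite V] (G : GameGraph V) (p : V × ℤ) : {q | G.Step p q}.Finite := by
  apply (Set.finite_range (fun u : V => (u, p.2 + G.w p.1 u))).subset
  rintro ⟨u, c⟩ ⟨_, h⟩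
  exact ⟨u, by simp only at h; rw [h]⟩

/-- Plugging finite winning systems into the exits of a finite system. By prefix independence a
run that has entered one of the plugged systems is winning, and all other runs stay in the
original system. -/
theorem good_of_sim [Finite V] {G : GameGraph V} {Lo Hi : Set ℤ} {X : Type} [Finite X]
    {val : X → V × ℤ} {nx : X → X → Prop} (hs : G.Sim {q | G.Good Lo Hi q} val nx)
    (hw : ChainsWin Lo Hi val nx) (x₀ : X) : G.Good Lo Hi (val x₀) := by
  let Q : Set (V × ℤ) := {q | G.Good Lo Hi q ∧ ∃ x, G.Step (val x) q}
  have hQ : Q.Finite := by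
    apply (Set.finite_iUnion (fun x => G.finite_step (val x))).subset
    rintro q ⟨_, x, hx⟩
    exact Set.mem_iUnion.2 ⟨x, hx⟩
  have hfin : Finite Q := hQ
  have hg : ∀ q : Q, G.Good Lo Hi q := fun q => q.2.1
  choose Y hYf vl nt hsim hwin rt hrt using hg
  let val' : X ⊕ (Σ q : Q, Y q) → V × ℤ := Sum.elim val (fun z => vl z.1 z.2)
  let nx' : X ⊕ (Σ q : Q, Y q) → X ⊕ (Σ q : Q, Y q) → Prop := fun a b =>
    match a, b with
    | .inl x, .inl y => nx x y
    | .inl x, .inr z => G.Step (val x) (vl z.1 z.2)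
    | .inr _, .inl _ => False
    | .inr z, .inr z' => ∃ (q : Q) (y y' : Y q), z = ⟨q, y⟩ ∧ z' = ⟨q, y'⟩ ∧ nt q y y'
  refine ⟨X ⊕ (Σ q : Q, Y q), inferInstance, val', nx', ⟨?_, ?_, ?_⟩, ?_, .inl x₀, rfl⟩
  · rintro (x | z) (y | z') h
    · exact hs.step _ _ h
    · exact h
    · exact h.elim
    · obtain ⟨q, y, y', rfl, rfl, h⟩ := h
      exact (hsim q).step _ _ h
  · rintro (x | ⟨q, y⟩) h
    · left
      rcases hs.eve x h with ⟨y, hy⟩ | ⟨q, hq, hxq⟩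
      · exact ⟨.inl y, hy⟩
      · refine ⟨.inr ⟨⟨q, hq, x, hxq⟩, rt _⟩, ?_⟩
        change G.Step (val x) (vl _ (rt _))
        rw [hrt]; exact hxq
    · rcases (hsim q).eve y h with ⟨y', hy⟩ | ⟨q, hq, hxq⟩
      · exact .inl ⟨.inr ⟨q, y'⟩, q, y, y', rfl, rfl, hy⟩
      · exact hq.elim
  · rintro (x | ⟨q, y⟩) h p hp
    · right
      rcases hs.adam x h p hp with hq | ⟨y, hy⟩
      · refine ⟨.inr ⟨⟨p, hq, x, hp⟩, rt _⟩, ?_, hrt ⟨p, hq, x, hp⟩⟩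
        change G.Step (val x) (vl _ (rt _))
        rw [hrt]; exact hp
      · exact ⟨.inl y, hy⟩
    · rcases (hsim q).adam y h p hp with hq | ⟨y', hy, hy'⟩
      · exact hq.elim
      · exact .inr ⟨.inr ⟨q, y'⟩, ⟨q, y, y', rfl, rfl, hy⟩, hy'⟩
  · intro s hsn
    by_cases hall : ∀ i, ∃ x, s i = .inl x
    · choose t ht using hall
      have := hw t (fun i => by have := hsn i; rw [ht, ht] at this; exact this)
      simpa [ht, val'] using this
    · push Not at hall
      obtain ⟨i, hi⟩ := hall
      rcases hsi : s i with x | ⟨q, y⟩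
      · exact (hi x hsi).elim
      have hin : ∀ j, ∃ y : Y q, s (i + j) = .inr ⟨q, y⟩ := by
        intro j
        induction j with
        | zero => exact ⟨y, hsi⟩
        | succ j ih =>
          obtain ⟨y, hy⟩ := ih
          have h := hsn (i + j)
          rw [hy] at h
          rcases hz : s (i + j + 1) with x | z
          · rw [hz] at h; exact h.elim
          · rw [hz] at h
            obtain ⟨q', y1, y2, h1, h2, h3⟩ := h
            cases h1
            exact ⟨y2, by rw [← h2, ← hz, add_assoc]⟩
      choose t ht using hin
      apply WinSeq.of_tail i
      have := hwin q t (fun j => by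
        have h := hsn (i + j)
        rw [add_assoc, ht, ht] at h
        obtain ⟨q', y1, y2, h1, h2, h3⟩ := h
        cases h1
        cases h2
        exact h3)
      simpa [ht, val'] using this

theorem good_of_eve [Finite V] {G : GameGraph V} {Lo Hi : Set ℤ} {p q : V × ℤ}
    (hp : p.1 ∈ G.Eve) (h : G.Step p q) (hq : G.Good Lo Hi q) : G.Good Lo Hi p :=
  good_of_sim (X := Unit) (val := fun _ => p) (nx := fun _ _ => False)
    ⟨fun _ _ h => h.elim, fun _ _ => .inr ⟨q, hq, h⟩, fun _ h => (h hp).elim⟩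
    (fun _ h => (h 0).elim) ()

theorem good_of_adam [Finite V] {G : GameGraph V} {Lo Hi : Set ℤ} {p : V × ℤ}
    (hp : p.1 ∉ G.Eve) (h : ∀ q, G.Step p q → G.Good Lo Hi q) : G.Good Lo Hi p :=
  good_of_sim (X := Unit) (val := fun _ => p) (nx := fun _ _ => False)
    ⟨fun _ _ h => h.elim, fun _ h => (hp h).elim, fun _ _ q hq => .inl (h q hq)⟩
    (fun _ h => (h 0).elim) ()

/-! ### Forcing a lower bound -/

/-- A winning system of non-good configurations, all of whose sums are at least `a`; its exits
are good. -/
structure Trap (G : GameGraph V) (Lo Hi : Set ℤ) (a : ℤ) {X : Type} (val : X → V × ℤ)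
    (nx : X → X → Prop) : Prop where
  sim : G.Sim {q | G.Good Lo Hi q} val nx
  win : ChainsWin Lo Hi val nx
  bad : ∀ x, ¬ G.Good Lo Hi (val x)
  mem : a ∈ Lo
  le : ∀ x, a ≤ (val x).2

/-- `Dist r Q d x`: some `r`-path of length `d` leads from `x` into `Q`. -/
def Dist {X : Type} (r : X → X → Prop) (Q : X → Prop) : ℕ → X → Prop
  | 0, x => Q x
  | d + 1, x => ∃ y, r x y ∧ Dist r Q d y

theorem exists_dist {X : Type} {r : X → X → Prop} {Q : X → Prop} {x y : X}
    (h : Relation.ReflTransGen r x y) (hy : Q y) : ∃ d, Dist r Q d x := by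
  induction h using Relation.ReflTransGen.head_induction_on with
  | refl => exact ⟨0, hy⟩
  | head h1 _ ih =>
    obtain ⟨d, hd⟩ := ih
    exact ⟨d + 1, _, h1, hd⟩

/-- If each of the sets `Q n` can be reached from everywhere, some infinite path visits `Q n`
for arbitrarily large `n`, arbitrarily late. -/
theorem exists_fair_chain {X : Type} {r : X → X → Prop} {Q : ℕ → X → Prop}
    (hr : ∀ x, ∃ y, r x y) (h : ∀ x n, ∃ y, Relation.ReflTransGen r x y ∧ Q n y) (x₀ : X) :
    ∃ s : ℕ → X, (∀ i, r (s i) (s (i + 1))) ∧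
      ∀ m N, ∃ n k, m ≤ n ∧ N ≤ k ∧ Q n (s k) := by
  -- A state records the current node, the index of the pursued set, and the distance to it.
  let St := {z : X × ℕ × ℕ // Dist r (Q z.2.1) z.2.2 z.1}
  let R : St → St → Prop := fun z z' => r z.1.1 z'.1.1 ∧
    ((z.1.2.2 = 0 ∧ z'.1.2.1 = z.1.2.1 + 1) ∨
      (z.1.2.2 = z'.1.2.2 + 1 ∧ z'.1.2.1 = z.1.2.1))
  have hd : ∀ x n, ∃ d, Dist r (Q n) d x := fun x n => by
    obtain ⟨y, hy, hq⟩ := h x n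
    exact exists_dist hy hq
  have hR : ∀ z, ∃ z', R z z' := by
    rintro ⟨⟨x, n, d⟩, hz⟩
    rcases d with _ | d
    · obtain ⟨y, hy⟩ := hr x
      obtain ⟨d', hd'⟩ := hd y (n + 1)
      exact ⟨⟨⟨y, n + 1, d'⟩, hd'⟩, hy, .inl ⟨rfl, rfl⟩⟩
    · obtain ⟨y, hy, hyd⟩ := hz
      exact ⟨⟨⟨y, n, d⟩, hyd⟩, hy, .inr ⟨rfl, rfl⟩⟩
  obtain ⟨d₀, hd₀⟩ := hd x₀ 0
  obtain ⟨s, -, hs⟩ := exists_chain hR ⟨⟨x₀, 0, d₀⟩, hd₀⟩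
  have key : ∀ d i, (s i).1.2.2 = d → ∃ j, i ≤ j ∧ (s j).1.2.2 = 0 ∧
      (s j).1.2.1 = (s i).1.2.1 := by
    intro d
    induction d with
    | zero => exact fun i hi => ⟨i, le_rfl, hi, rfl⟩
    | succ d ih =>
      intro i hi
      rcases (hs i).2 with h | h
      · omega
      · obtain ⟨j, h1, h2, h3⟩ := ih (i + 1) (by omega)
        exact ⟨j, by omega, h2, by omega⟩
  have grow : ∀ m N, ∃ i, N ≤ i ∧ m ≤ (s i).1.2.1 := by
    intro m
    induction m with
    | zero => exact fun N => ⟨N, le_rfl, Nat.zero_le _⟩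
    | succ m ih =>
      intro N
      obtain ⟨i, hi, hm⟩ := ih N
      obtain ⟨j, h1, h2, h3⟩ := key _ i rfl
      refine ⟨j + 1, by omega, ?_⟩
      rcases (hs j).2 with h | h <;> omega
  refine ⟨fun i => (s i).1.1, fun i => (hs i).1, fun m N => ?_⟩
  obtain ⟨i, hi, hm⟩ := grow m N
  obtain ⟨j, h1, h2, h3⟩ := key _ i rfl
  refine ⟨(s j).1.2.1, j, by omega, by omega, ?_⟩
  have := (s j).2
  rw [h2] at this
  exact this

theorem exists_coinitial {Lo : Set ℤ} (hup : ∀ a ∈ Lo, ∀ a', a ≤ a' → a' ∈ Lo)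
    (hne : Lo.Nonempty) :
    ∃ A : ℕ → ℤ, (∀ n, A n ∈ Lo) ∧ ∀ a ∈ Lo, ∃ m, ∀ n, m ≤ n → A n ≤ a := by
  by_cases hb : BddBelow Lo
  · exact ⟨fun _ => sInf Lo, fun _ => Int.csInf_mem hne hb,
      fun a ha => ⟨0, fun _ _ => csInf_le hb ha⟩⟩
  · refine ⟨fun n => -(n : ℤ), fun n => ?_,
      fun a _ => ⟨(-a).toNat, fun n hn => by simp only; omega⟩⟩
    rw [not_bddBelow_iff] at hb
    obtain ⟨a, ha, hlt⟩ := hb (-(n : ℤ))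
    exact hup a ha _ hlt.le

/-- A Baire category argument on the runs staying among non-good configurations: such a run is
eventually bounded below by a member of `Lo`, so one bound works for all runs extending a
suitable finite one. -/
theorem exists_trap [Finite V] {G : GameGraph V} {Lo Hi : Set ℤ}
    (hup : ∀ a ∈ Lo, ∀ a', a ≤ a' → a' ∈ Lo) (hne : Lo.Nonempty) {X : Type}
    {val : X → V × ℤ} {nx : X → X → Prop} (hs : G.Sim ∅ val nx) (hw : ChainsWin Lo Hi val nx)
    (x₁ : X) (hx₁ : ¬ G.Good Lo Hi (val x₁)) :
    ∃ (Y : Type) (val' : Y → V × ℤ) (nx' : Y → Y → Prop) (a : ℤ),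
      G.Trap Lo Hi a val' nx' ∧ Nonempty Y := by
  obtain ⟨A, hA, hA'⟩ := exists_coinitial hup hne
  let B := {x // ¬ G.Good Lo Hi (val x)}
  let r : B → B → Prop := fun x y => nx x.1 y.1
  have hE : ∀ x : B, (val x.1).1 ∈ G.Eve → ∃ y, r x y := by
    intro x hx
    rcases hs.eve x.1 hx with ⟨y, hy⟩ | ⟨q, hq, -⟩
    · exact ⟨⟨y, fun hg => x.2 (good_of_eve hx (hs.step _ _ hy) hg)⟩, hy⟩
    · exact hq.elim
  have hAd : ∀ x : B, (val x.1).1 ∉ G.Eve → ∀ q, G.Step (val x.1) q →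
      G.Good Lo Hi q ∨ ∃ y, r x y ∧ val y.1 = q := by
    intro x hx q hq
    by_cases hg : G.Good Lo Hi q
    · exact .inl hg
    · rcases hs.adam x.1 hx q hq with h | ⟨y, hy, rfl⟩
      · exact h.elim
      · exact .inr ⟨⟨y, hg⟩, hy, rfl⟩
  have hr : ∀ x, ∃ y, r x y := by
    intro x
    by_cases hx : (val x.1).1 ∈ G.Eve
    · exact hE x hx
    · by_contra hcon
      refine x.2 (good_of_adam hx fun q hq => ?_)
      rcases hAd x hx q hq with h | ⟨y, hy, -⟩
      · exact h
      · exact (hcon ⟨y, hy⟩).elim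
  have hex : ∃ (x : B) (n : ℕ), ∀ y, Relation.ReflTransGen r x y → A n ≤ (val y.1).2 := by
    by_contra hcon
    push Not at hcon
    obtain ⟨s, hsr, hsq⟩ := exists_fair_chain (Q := fun n y => (val y.1).2 < A n) hr hcon
      ⟨x₁, hx₁⟩
    obtain ⟨a, ha, b, hb, ⟨N, hN⟩, -⟩ := hw (fun i => (s i).1) hsr
    obtain ⟨m, hm⟩ := hA' a ha
    obtain ⟨n, k, hn, hk, hlt⟩ := hsq m N
    have h1 := hN k hk
    have h2 := hm n hn
    simp only at h1
    omega
  obtain ⟨x, n, hxn⟩ := hex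
  refine ⟨{y // Relation.ReflTransGen r x y}, fun y => val y.1.1, fun y z => r y.1 z.1, A n,
    ⟨⟨fun y z h => hs.step _ _ h, fun y hy => ?_, fun y hy q hq => ?_⟩, ?_, fun y => y.1.2,
      hA n, fun y => hxn _ y.2⟩, ⟨⟨x, .refl⟩⟩⟩
  · obtain ⟨z, hz⟩ := hE y.1 hy
    exact .inl ⟨⟨z, y.2.tail hz⟩, hz⟩
  · rcases hAd y.1 hy q hq with h | ⟨z, hz, hq⟩
    · exact .inl h
    · exact .inr ⟨⟨z, y.2.tail hz⟩, hz, hq⟩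
  · intro s hsn
    exact hw (fun i => (s i).1.1) hsn

theorem Trap.eve_next [Finite V] {G : GameGraph V} {Lo Hi : Set ℤ} {a : ℤ} {X : Type}
    {val : X → V × ℤ} {nx : X → X → Prop} (h : G.Trap Lo Hi a val nx) (x : X)
    (hx : (val x).1 ∈ G.Eve) : ∃ y, nx x y := by
  rcases h.sim.eve x hx with h' | ⟨q, hq, hq'⟩
  · exact h'
  · exact (h.bad x (good_of_eve hx hq' hq)).elim

/-! ### Intervals bounded above -/

/-- Configurations of `P` from which Eve can force a visit to `C`, or an exit into `T`, within
`n` moves and inside `P`. -/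
def Att (G : GameGraph V) (T P C : Set (V × ℤ)) : ℕ → Set (V × ℤ)
  | 0 => C
  | n + 1 => Att G T P C n ∪ {q | q ∈ P ∧
      (q.1 ∈ G.Eve → ∃ q' ∈ Att G T P C n, G.Step q q') ∧
      (q.1 ∉ G.Eve → ∀ q', G.Step q q' → q' ∈ T ∨ q' ∈ Att G T P C n)}

theorem Att.mono {G : GameGraph V} {T P C : Set (V × ℤ)} {m n : ℕ} (h : m ≤ n) :
    Att G T P C m ⊆ Att G T P C n := by
  induction n, h using Nat.le_induction with
  | base => exact subset_rfl
  | succ n _ ih => exact ih.trans Set.subset_union_left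

theorem Att.subset {G : GameGraph V} {T P C : Set (V × ℤ)} (hC : C ⊆ P) (n : ℕ) :
    Att G T P C n ⊆ P := by
  induction n with
  | zero => exact hC
  | succ n ih => exact Set.union_subset ih fun q hq => hq.1

theorem finite_of_bounds [Finite V] {D : Set (V × ℤ)} {a b : ℤ}
    (h : ∀ q ∈ D, a ≤ q.2 ∧ q.2 ≤ b) : D.Finite :=
  ((Set.finite_univ (α := V)).prod (Set.finite_Icc a b)).subset
    fun q hq => ⟨Set.mem_univ _, h q hq⟩

/-- With a greatest admissible upper bound `b`, the trap has finitely many configurations of sum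
at most `b`, and from each of them Eve can force a return within a bounded number of moves. -/
theorem Trap.false_of_max [Finite V] {G : GameGraph V} {Lo Hi : Set ℤ} {a : ℤ} {X : Type}
    {val : X → V × ℤ} {nx : X → X → Prop} (h : G.Trap Lo Hi a val nx) (x₀ : X) {b : ℤ}
    (hb : b ∈ Hi) (hmax : ∀ b' ∈ Hi, b' ≤ b) : False := by
  obtain ⟨W, hW0, hW⟩ := G.exists_weight_bound
  let P := Set.range val
  let C := {q | q ∈ P ∧ q.2 ≤ b}
  have hCP : C ⊆ P := fun q hq => hq.1
  let T := {q | G.Good Lo Hi q}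
  have hatt : ∀ y, ∃ n, val y ∈ Att G T P C n := by
    by_contra hcon
    push Not at hcon
    obtain ⟨y₀, hy₀⟩ := hcon
    let Z := {y // ∀ n, val y ∉ Att G T P C n}
    have hnext : ∀ y : Z, ∃ z : Z, nx y.1 z.1 := by
      rintro ⟨y, hy⟩
      by_contra hno
      have hno' : ∀ z, nx y z → ∃ n, val z ∈ Att G T P C n := by
        intro z hz
        by_contra hz'
        push Not at hz'
        exact hno ⟨⟨z, hz'⟩, hz⟩
      by_cases hev : (val y).1 ∈ G.Eve
      · obtain ⟨z, hz⟩ := h.eve_next y hev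
        obtain ⟨n, hn⟩ := hno' z hz
        exact hy (n + 1) (.inr ⟨⟨y, rfl⟩, fun _ => ⟨_, hn, h.sim.step _ _ hz⟩,
          fun h' => (h' hev).elim⟩)
      · have hfin : Finite {q | G.Step (val y) q} := G.finite_step (val y)
        obtain ⟨N, hN⟩ := exists_uniform (ι := {q | G.Step (val y) q}) (α := ℕ)
          (Pr := fun q n => q.1 ∈ T ∨ q.1 ∈ Att G T P C n)
          (fun q m n hmn hq => hq.imp id (fun hq => Att.mono hmn hq))
          (by
            rintro ⟨q, hq⟩
            rcases h.sim.adam y hev q hq with h' | ⟨z, hz, rfl⟩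
            · exact ⟨0, .inl h'⟩
            · obtain ⟨n, hn⟩ := hno' z hz
              exact ⟨n, .inr hn⟩)
        exact hy (N + 1) (.inr ⟨⟨y, rfl⟩, fun h' => (hev h').elim, fun _ q hq => hN ⟨q, hq⟩⟩)
    obtain ⟨s, -, hs⟩ := exists_chain (r := fun y z : Z => nx y.1 z.1) hnext ⟨y₀, hy₀⟩
    obtain ⟨_, _, b', hb', -, h2⟩ := h.win (fun i => (s i).1) hs
    obtain ⟨k, -, hk⟩ := h2 0
    exact (s k).2 0 ⟨⟨_, rfl⟩, hk.trans (hmax b' hb')⟩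
  let rank : V × ℤ → ℕ := fun q => sInf {n | q ∈ Att G T P C n}
  have hrank : ∀ q n, q ∈ Att G T P C n → rank q ≤ n := fun q n hq => Nat.sInf_le hq
  have hdesc : ∀ q ∈ P, q ∉ C → ∃ n, n < rank q ∧
      (q.1 ∈ G.Eve → ∃ q' ∈ Att G T P C n, G.Step q q') ∧
      (q.1 ∉ G.Eve → ∀ q', G.Step q q' → q' ∈ T ∨ q' ∈ Att G T P C n) := by
    rintro _ ⟨y, rfl⟩ hC
    have hmem : val y ∈ Att G T P C (rank (val y)) := Nat.sInf_mem (hatt y)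
    rcases hr : rank (val y) with _ | n
    · rw [hr] at hmem; exact (hC hmem).elim
    · rw [hr] at hmem
      rcases hmem with hm | hm
      · have := hrank _ _ hm; omega
      · exact ⟨n, by omega, hm.2⟩
  -- The sum increases by at most `W` per move while the rank drops, so `pot` does not increase
  -- between visits to `C`.
  let pot : V × ℤ → ℤ := fun q => q.2 + W * rank q
  have hpot0 : ∀ q, q.2 ≤ pot q := fun q => by
    have : 0 ≤ W * (rank q : ℤ) := by positivity
    simp only [pot]; omega
  have hPa : ∀ q ∈ P, a ≤ q.2 := by rintro _ ⟨y, rfl⟩; exact h.le y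
  let D : Set (V × ℤ) := {q | q ∈ P ∧ q.2 ≤ max (b + W) (val x₀).2}
  have hD : D.Finite := finite_of_bounds (fun q hq => ⟨hPa q hq.1, hq.2⟩)
  obtain ⟨K, hK⟩ := (hD.image pot).bddAbove
  have hK' : ∀ q ∈ D, pot q ≤ K := fun q hq => hK ⟨q, hq, rfl⟩
  have hstepW : ∀ q q', G.Step q q' → q'.2 ≤ q.2 + W := fun q q' hq => by
    have := hq.2
    have := le_of_abs_le (hW q.1 q'.1)
    omega
  let M : Set (V × ℤ) := {q | q ∈ P ∧ pot q ≤ K}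
  have hM : M.Finite := finite_of_bounds (fun q hq => ⟨hPa q hq.1, (hpot0 q).trans hq.2⟩)
  have hMf : Finite M := hM
  have hCs : ∀ q ∈ C, ∀ q' ∈ P, G.Step q q' → q' ∈ M := fun q hq q' hq' hst =>
    ⟨hq', hK' _ ⟨hq', le_max_of_le_left (by have := hstepW _ _ hst; have := hq.2; omega)⟩⟩
  have hMs : ∀ q ∈ M, ∀ n q', n < rank q → q' ∈ Att G T P C n → G.Step q q' →
      q' ∈ M ∧ rank q' < rank q := by
    intro q hq n q' hn hq' hst
    have h1 := hrank _ _ hq'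
    refine ⟨⟨Att.subset hCP _ hq', ?_⟩, by omega⟩
    have h2 := hstepW _ _ hst
    have h3 := hq.2
    have h4 : W * ((rank q' : ℤ) + 1) ≤ W * rank q :=
      mul_le_mul_of_nonneg_left (by omega) hW0
    simp only [pot] at h3 ⊢
    linarith
  let nxt : M → M → Prop := fun q q' => G.Step q.1 q'.1 ∧ (q.1 ∈ C ∨ rank q'.1 < rank q.1)
  have hx₀ : val x₀ ∈ M := ⟨⟨_, rfl⟩, hK' _ ⟨⟨_, rfl⟩, le_max_right _ _⟩⟩
  refine h.bad x₀ (good_of_sim (X := M) (val := Subtype.val) (nx := nxt)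
    ⟨fun _ _ hq => hq.1, ?_, ?_⟩ ?_ ⟨val x₀, hx₀⟩)
  · rintro ⟨q, hq⟩ hev
    left
    by_cases hC : q ∈ C
    · obtain ⟨y, rfl⟩ := hq.1
      obtain ⟨z, hz⟩ := h.eve_next y hev
      have hst := h.sim.step _ _ hz
      exact ⟨⟨val z, hCs _ hC _ ⟨z, rfl⟩ hst⟩, hst, .inl hC⟩
    · obtain ⟨n, hn, h1, -⟩ := hdesc q hq.1 hC
      obtain ⟨q', hq', hst⟩ := h1 hev
      have := hMs q hq n q' hn hq' hst
      exact ⟨⟨q', this.1⟩, hst, .inr this.2⟩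
  · rintro ⟨q, hq⟩ hev q' hst
    by_cases hC : q ∈ C
    · obtain ⟨y, rfl⟩ := hq.1
      rcases h.sim.adam y hev q' hst with hg | ⟨z, hz, rfl⟩
      · exact .inl hg
      · exact .inr ⟨⟨val z, hCs _ hC _ ⟨z, rfl⟩ hst⟩, ⟨hst, .inl hC⟩, rfl⟩
    · obtain ⟨n, hn, -, h2⟩ := hdesc q hq.1 hC
      rcases h2 hev q' hst with hg | hq'
      · exact .inl hg
      · have := hMs q hq n q' hn hq' hst
        exact .inr ⟨⟨q', this.1⟩, ⟨hst, .inr this.2⟩, rfl⟩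
  · intro s hs
    refine ⟨a, h.mem, b, hb, ⟨0, fun k _ => hPa _ (s k).2.1⟩, fun N => ?_⟩
    by_contra hcon
    push Not at hcon
    have hdec : ∀ j, rank (s (N + j)).1 + j ≤ rank (s N).1 := by
      intro j
      induction j with
      | zero => simp
      | succ j ih =>
        rcases (hs (N + j)).2 with hC | hlt
        · have := hcon (N + j) (by omega); have := hC.2; omega
        · rw [add_assoc] at hlt; omega
    have := hdec (rank (s N).1 + 1)
    omega

/-! ### Intervals unbounded above -/

theorem Good.shift {G : GameGraph V} {Lo : Set ℤ} {v : V} {c c' : ℤ}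
    (h : G.Good Lo Set.univ (v, c)) (hc : c ≤ c') : G.Good Lo Set.univ (v, c') := by
  obtain ⟨X, hX, val, nx, hs, hw, x, hx⟩ := h
  refine ⟨X, hX, fun y => ((val y).1, (val y).2 + (c' - c)), nx, ⟨?_, ?_, ?_⟩, ?_, x, ?_⟩
  · intro y z hyz
    have := hs.step y z hyz
    exact ⟨this.1, by have := this.2; simp only; omega⟩
  · intro y hy
    rcases hs.eve y hy with h | ⟨q, hq, -⟩
    · exact .inl h
    · exact hq.elim
  · rintro y hy ⟨u, d⟩ ⟨h1, h2⟩
    simp only at h1 h2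
    rcases hs.adam y hy (u, d - (c' - c)) ⟨h1, by simp only; omega⟩ with hq | ⟨z, hz, hzq⟩
    · exact hq.elim
    · exact .inr ⟨z, hz, by rw [hzq]; simp⟩
  · intro s hsn
    obtain ⟨a, ha, b, -, ⟨N, hN⟩, h2⟩ := hw s hsn
    refine ⟨a, ha, b + (c' - c), Set.mem_univ _, ⟨N, fun k hk => ?_⟩, fun N => ?_⟩
    · have := hN k hk
      simp only at this ⊢
      omega
    · obtain ⟨k, hk, hk'⟩ := h2 N
      exact ⟨k, hk, by simp only at hk' ⊢; omega⟩
  · simp only [hx]; simp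

/-- Adam can force the sum of the weights to reach `k` within `n` moves from `v`, staying in `R`,
provided that Eve moves inside `U`. -/
def Climb (G : GameGraph V) (U R : Set V) : ℕ → ℤ → V → Prop
  | 0, k, v => v ∈ R ∧ k ≤ 0
  | n + 1, k, v => v ∈ R ∧ (k ≤ 0 ∨
      ((v ∈ G.Eve → ∀ u, G.E v u → u ∈ U → Climb G U R n (k - G.w v u) u) ∧
       (v ∉ G.Eve → ∃ u, G.E v u ∧ Climb G U R n (k - G.w v u) u)))

theorem Climb.mem {G : GameGraph V} {U R : Set V} {n : ℕ} {k : ℤ} {v : V}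
    (h : Climb G U R n k v) : v ∈ R := by
  cases n <;> exact h.1

theorem Climb.succ {G : GameGraph V} {U R : Set V} {n : ℕ} {k : ℤ} {v : V}
    (h : Climb G U R n k v) : Climb G U R (n + 1) k v := by
  induction n generalizing k v with
  | zero => exact ⟨h.1, .inl h.2⟩
  | succ n ih =>
    refine ⟨h.1, h.2.imp id fun h' => ⟨fun hv u hu hU => ih (h'.1 hv u hu hU), fun hv => ?_⟩⟩
    obtain ⟨u, hu, hc⟩ := h'.2 hv
    exact ⟨u, hu, ih hc⟩

theorem Climb.mono {G : GameGraph V} {U R : Set V} {m n : ℕ} {k : ℤ} {v : V} (hmn : m ≤ n)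
    (h : Climb G U R m k v) : Climb G U R n k v := by
  induction n, hmn using Nat.le_induction with
  | base => exact h
  | succ n _ ih => exact ih.succ

theorem Climb.anti {G : GameGraph V} {U R : Set V} {n : ℕ} {k k' : ℤ} {v : V} (hk : k' ≤ k)
    (h : Climb G U R n k v) : Climb G U R n k' v := by
  induction n generalizing k k' v with
  | zero => exact ⟨h.1, hk.trans h.2⟩
  | succ n ih =>
    refine ⟨h.1, h.2.imp (fun h => hk.trans h) fun h' =>
      ⟨fun hv u hu hU => ih (by omega) (h'.1 hv u hu hU), fun hv => ?_⟩⟩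
    obtain ⟨u, hu, hc⟩ := h'.2 hv
    exact ⟨u, hu, ih (by omega) hc⟩

/-- If Adam cannot force a gain of `k`, Eve can move so that this persists. -/
theorem not_climb_step [Finite V] {G : GameGraph V} {U R : Set V} {k : ℤ} {v : V} (hv : v ∈ R)
    (h : ∀ n, ¬ Climb G U R n k v) : 0 < k ∧
      (v ∈ G.Eve → ∃ u, G.E v u ∧ u ∈ U ∧ ∀ n, ¬ Climb G U R n (k - G.w v u) u) ∧
      (v ∉ G.Eve → ∀ u, G.E v u → ∀ n, ¬ Climb G U R n (k - G.w v u) u) := by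
  refine ⟨?_, fun he => ?_, fun he u hu n hc => ?_⟩
  · by_contra hk
    exact h 0 ⟨hv, by omega⟩
  · by_contra hcon
    push Not at hcon
    obtain ⟨N, hN⟩ := exists_uniform (ι := V) (α := ℕ)
      (Pr := fun u n => G.E v u → u ∈ U → Climb G U R n (k - G.w v u) u)
      (fun u m n hmn hu h1 h2 => (hu h1 h2).mono hmn)
      (fun u => by
        by_cases hu : G.E v u ∧ u ∈ U
        · obtain ⟨n, hn⟩ := hcon u hu.1 hu.2
          exact ⟨n, fun _ _ => hn⟩
        · exact ⟨0, fun h1 h2 => (hu ⟨h1, h2⟩).elim⟩)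
    exact h (N + 1) ⟨hv, .inr ⟨fun _ => hN, fun h' => (h' he).elim⟩⟩
  · exact h (n + 1) ⟨hv, .inr ⟨fun h' => (he h').elim, fun _ => ⟨u, hu, hc⟩⟩⟩

/-- In a trap Adam cannot force unbounded gains among the vertices without good configurations:
otherwise he could do so again and again, dropping by a bounded amount in between, and produce a
run of the trap whose sums tend to infinity. -/
theorem Trap.exists_not_climb [Finite V] {G : GameGraph V} {Lo Hi : Set ℤ} {a : ℤ} {X : Type}
    {val : X → V × ℤ} {nx : X → X → Prop} (h : G.Trap Lo Hi a val nx) (v₀ : V) :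
    ∃ k, ∀ n, ¬ Climb G {v | ∃ y, (val y).1 = v}
      {v | (∃ y, (val y).1 = v) ∧ ¬ ∃ c, G.Good Lo Hi (v, c)} n k v₀ := by
  set U : Set V := {v | ∃ y, (val y).1 = v} with hU
  set R : Set V := {v | (∃ y, (val y).1 = v) ∧ ¬ ∃ c, G.Good Lo Hi (v, c)} with hR
  by_contra hv₀
  push Not at hv₀
  obtain ⟨W, hW0, hW⟩ := G.exists_weight_bound
  let Φ : Set V := {v | ∀ k, ∃ n, Climb G U R n k v}
  obtain ⟨k₁, hk₁⟩ := exists_uniform (ι := V) (α := ℤ)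
    (Pr := fun u k => u ∉ Φ → ∀ n, ¬ Climb G U R n k u)
    (fun u m n hmn hu hΦ j hj => hu hΦ j (hj.anti hmn))
    (fun u => by
      by_cases hu : u ∈ Φ
      · exact ⟨0, fun h' => (h' hu).elim⟩
      · have hu' := hu
        simp only [Φ, Set.mem_ofPred_eq, not_forall, not_exists] at hu'
        obtain ⟨k, hk⟩ := hu'
        exact ⟨k, fun _ => hk⟩)
  -- As long as a gain of at least `κ` is outstanding, the next vertex is still in `Φ`.
  obtain ⟨κ, hκ0, hκ1⟩ : ∃ κ : ℤ, 0 < κ ∧ k₁ + W ≤ κ :=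
    ⟨max 1 (k₁ + W), by omega, by omega⟩
  obtain ⟨N, hN⟩ := exists_uniform (ι := V) (α := ℕ)
    (Pr := fun u n => u ∈ Φ → Climb G U R n κ u)
    (fun u m n hmn hu hΦ => (hu hΦ).mono hmn)
    (fun u => by
      by_cases hu : u ∈ Φ
      · obtain ⟨n, hn⟩ := hu κ
        exact ⟨n, fun _ => hn⟩
      · exact ⟨0, fun hΦ => (hu hΦ).elim⟩)
  -- A state records a node of the trap, the number of moves left and the outstanding gain.
  let Inv : X × ℕ × ℤ → Prop := fun z => (val z.1).1 ∈ Φ ∧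
    Climb G U R z.2.1 z.2.2 (val z.1).1 ∧ κ ≤ z.2.2 ∧ z.2.2 + z.2.1 * W ≤ κ + N * W
  let St := {z // Inv z}
  let r : St → St → Prop := fun z z' => nx z.1.1 z'.1.1 ∧
    ((z.1.2.1 = z'.1.2.1 + 1 ∧ (val z'.1.1).2 + z'.1.2.2 = (val z.1.1).2 + z.1.2.2) ∨
      (val z.1.1).2 + z.1.2.2 < (val z'.1.1).2 + z'.1.2.2)
  have hnext : ∀ z : St, ∃ z', r z z' := by
    rintro ⟨⟨y, n, k⟩, hΦ, hc, hk, hb⟩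
    simp only at hΦ hc hk hb
    rcases n with _ | n
    · have := hc.2; omega
    have hc2 := hc.2.resolve_left (by omega)
    have hchild : ∃ y', nx y y' ∧ (val y').1 ∈ Φ ∧
        Climb G U R n (k - G.w (val y).1 (val y').1) (val y').1 := by
      by_cases hev : (val y).1 ∈ G.Eve
      · obtain ⟨y', hy'⟩ := h.eve_next y hev
        have hst := h.sim.step _ _ hy'
        refine ⟨y', hy', fun k' => ?_, hc2.1 hev _ hst.1 ⟨y', rfl⟩⟩
        obtain ⟨m, hm⟩ := hΦ (max 1 (k' + G.w (val y).1 (val y').1))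
        rcases m with _ | m
        · have := hm.2; omega
        have hm2 := hm.2.resolve_left (by omega)
        exact ⟨m, (hm2.1 hev _ hst.1 ⟨y', rfl⟩).anti (by omega)⟩
      · obtain ⟨u, hu, hcu⟩ := hc2.2 hev
        have huR := hcu.mem
        rcases h.sim.adam y hev (u, (val y).2 + G.w (val y).1 u) ⟨hu, rfl⟩ with
          hg | ⟨y', hy', hq⟩
        · exact (huR.2 ⟨_, hg⟩).elim
        · have hq1 : (val y').1 = u := by rw [hq]
          refine ⟨y', hy', ?_, by rw [hq1]; exact hcu⟩
          rw [hq1]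
          by_contra hnΦ
          refine hk₁ u hnΦ n (hcu.anti ?_)
          have := le_of_abs_le (hW (val y).1 u)
          omega
    obtain ⟨y', hy', hΦ', hc'⟩ := hchild
    have hst := (h.sim.step _ _ hy').2
    by_cases hlt : κ ≤ k - G.w (val y).1 (val y').1
    · refine ⟨⟨⟨y', n, k - G.w (val y).1 (val y').1⟩, hΦ', hc', hlt, ?_⟩, hy',
        .inl ⟨rfl, ?_⟩⟩
      · have := neg_le_of_abs_le (hW (val y).1 (val y').1)
        push_cast at hb
        simp only
        linarith
      · simp only; omega
    · exact ⟨⟨⟨y', N, κ⟩, hΦ', hN _ hΦ', le_rfl, le_rfl⟩, hy', .inr (by simp only; omega)⟩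
  obtain ⟨n₀, hn₀⟩ := hv₀ 0
  obtain ⟨⟨y₀, hy₀⟩, -⟩ := hn₀.mem
  have hΦ₀ : (val y₀).1 ∈ Φ := by rw [hy₀]; exact hv₀
  obtain ⟨s, -, hs⟩ := exists_chain hnext ⟨⟨y₀, N, κ⟩, hΦ₀, hN _ hΦ₀, le_rfl, le_rfl⟩
  let ψ : ℕ → ℤ := fun i => (val (s i).1.1).2 + (s i).1.2.2
  have hmono : Monotone ψ := monotone_nat_of_le_succ fun i => by
    rcases (hs i).2 with h' | h' <;> simp only [ψ] <;> omega
  have hinc : ∀ n i, (s i).1.2.1 = n → ∃ j, ψ i < ψ j := by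
    intro n
    induction n with
    | zero =>
      intro i hi
      rcases (hs i).2 with h' | h'
      · omega
      · exact ⟨i + 1, h'⟩
    | succ n ih =>
      intro i hi
      rcases (hs i).2 with h' | h'
      · obtain ⟨j, hj⟩ := ih (i + 1) (by omega)
        exact ⟨j, lt_of_le_of_lt (hmono (Nat.le_succ i)) hj⟩
      · exact ⟨i + 1, h'⟩
  have hunb : ∀ B : ℕ, ∃ i, ψ 0 + B ≤ ψ i := by
    intro B
    induction B with
    | zero => exact ⟨0, by simp⟩
    | succ B ih =>
      obtain ⟨i, hi⟩ := ih
      obtain ⟨j, hj⟩ := hinc _ i rfl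
      exact ⟨j, by push_cast; omega⟩
  obtain ⟨_, _, b, -, -, hb⟩ := h.win (fun i => (s i).1.1) (fun i => (hs i).1)
  obtain ⟨i, hi⟩ := hunb (b + κ + N * W + 1 - ψ 0).toNat
  obtain ⟨k, hk, hkb⟩ := hb i
  have h1 := hmono hk
  have h2 := (s k).2.2.2.2
  have h3 : (0 : ℤ) ≤ (s k).1.2.1 * W := by positivity
  have h4 := Int.self_le_toNat (b + κ + N * W + 1 - ψ 0)
  have h5 : ψ k = (val (s k).1.1).2 + (s k).1.2.2 := rfl
  simp only at hkb
  linarith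

/-- Without an upper bound on the admissible limits, Eve can keep all sums of the trap bounded:
at large sums the lower bound is not in danger, and there she prevents gains beyond a constant. -/
theorem Trap.false_of_univ [Finite V] {G : GameGraph V} {Lo : Set ℤ} {a : ℤ} {X : Type}
    {val : X → V × ℤ} {nx : X → X → Prop} (h : G.Trap Lo Set.univ a val nx) (x₀ : X) :
    False := by
  obtain ⟨W, hW0, hW⟩ := G.exists_weight_bound
  set U : Set V := {v | ∃ y, (val y).1 = v} with hU
  set R : Set V := {v | (∃ y, (val y).1 = v) ∧ ¬ ∃ c, G.Good Lo Set.univ (v, c)} with hR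
  obtain ⟨k₁, hk₁⟩ := exists_uniform (ι := V) (α := ℤ)
    (Pr := fun u k => ∀ n, ¬ Climb G U R n k u)
    (fun u m n hmn hu j hj => hu j (hj.anti hmn)) h.exists_not_climb
  -- The upward closure of the configurations of the trap.
  let S : Set (V × ℤ) := {q | ∃ y, (val y).1 = q.1 ∧ (val y).2 ≤ q.2}
  have hSa : ∀ q ∈ S, a ≤ q.2 := by
    rintro q ⟨y, -, hy⟩
    exact (h.le y).trans hy
  have hSE : ∀ q ∈ S, q.1 ∈ G.Eve → ∃ q' ∈ S, G.Step q q' := by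
    rintro ⟨v, c⟩ ⟨y, hy1, hy2⟩ hev
    simp only at hy1 hy2 hev
    subst hy1
    obtain ⟨z, hz⟩ := h.eve_next y hev
    have hst := h.sim.step _ _ hz
    refine ⟨((val z).1, c + G.w (val y).1 (val z).1), ⟨z, rfl, ?_⟩, hst.1, rfl⟩
    have := hst.2
    simp only
    omega
  have hSA : ∀ q ∈ S, q.1 ∉ G.Eve → ∀ q', G.Step q q' → G.Good Lo Set.univ q' ∨ q' ∈ S := by
    rintro ⟨v, c⟩ ⟨y, hy1, hy2⟩ hev ⟨u, d⟩ ⟨h1, h2⟩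
    simp only at hy1 hy2 hev h1 h2
    subst hy1
    rcases h.sim.adam y hev (u, (val y).2 + G.w (val y).1 u) ⟨h1, rfl⟩ with hg | ⟨z, -, hz⟩
    · exact .inl (Good.shift hg (by omega))
    · exact .inr ⟨z, by rw [hz], by rw [hz]; simp only; omega⟩
  obtain ⟨H, hH⟩ := exists_uniform (ι := V) (α := ℤ)
    (Pr := fun v H => (v ∈ U → ∀ c, H ≤ c → (v, c) ∈ S) ∧
      ((∃ c, G.Good Lo Set.univ (v, c)) → ∀ c, H ≤ c → G.Good Lo Set.univ (v, c)))
    (fun v m n hmn hv => ⟨fun h1 c hc => hv.1 h1 c (hmn.trans hc),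
      fun h1 c hc => hv.2 h1 c (hmn.trans hc)⟩)
    (fun v => by
      have h1 : ∃ H, v ∈ U → ∀ c, H ≤ c → (v, c) ∈ S := by
        by_cases hv : v ∈ U
        · obtain ⟨y, hy⟩ := hv
          exact ⟨(val y).2, fun _ c hc => ⟨y, hy, hc⟩⟩
        · exact ⟨0, fun h' => (hv h').elim⟩
      have h2 : ∃ H, (∃ c, G.Good Lo Set.univ (v, c)) →
          ∀ c, H ≤ c → G.Good Lo Set.univ (v, c) := by
        by_cases hv : ∃ c, G.Good Lo Set.univ (v, c)
        · obtain ⟨c, hc⟩ := hv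
          exact ⟨c, fun _ c' hc' => hc.shift hc'⟩
        · exact ⟨0, fun h' => (hv h').elim⟩
      obtain ⟨H₁, hH₁⟩ := h1
      obtain ⟨H₂, hH₂⟩ := h2
      exact ⟨max H₁ H₂, fun hv c hc => hH₁ hv c (le_trans (le_max_left _ _) hc),
        fun hv c hc => hH₂ hv c (le_trans (le_max_right _ _) hc)⟩)
  obtain ⟨K, hK1, hK2⟩ : ∃ K : ℤ, H + W + W + k₁ ≤ K ∧ (val x₀).2 + k₁ ≤ K :=
    ⟨max (H + W + W + k₁) ((val x₀).2 + k₁), by omega, by omega⟩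
  let M : Set (V × ℤ) := {q | q ∈ S ∧ ¬ G.Good Lo Set.univ q ∧
    ∀ n, ¬ Climb G U R n (K - q.2) q.1}
  have hMb : ∀ q ∈ M, a ≤ q.2 ∧ q.2 ≤ max K H := by
    rintro ⟨v, c⟩ ⟨hS, hg, hc⟩
    refine ⟨hSa _ hS, ?_⟩
    by_cases hvR : v ∈ R
    · have := (not_climb_step hvR hc).1
      simp only at this ⊢
      omega
    · have hvU : ∃ y, (val y).1 = v := by
        obtain ⟨y, hy, -⟩ := hS
        exact ⟨y, hy⟩
      have hT : ∃ c, G.Good Lo Set.univ (v, c) := by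
        by_contra hT
        exact hvR ⟨hvU, hT⟩
      by_contra hlt
      simp only at hlt
      exact hg ((hH v).2 hT c (by omega))
  have hMf : Finite M := finite_of_bounds hMb
  have hlow : ∀ q q', q.2 < H + W → G.Step q q' → ∀ n, ¬ Climb G U R n (K - q'.2) q'.1 := by
    intro q q' hq hst n hc
    refine hk₁ q'.1 n (hc.anti ?_)
    have := hst.2
    have := le_of_abs_le (hW q.1 q'.1)
    omega
  have hhigh : ∀ q ∈ M, H + W ≤ q.2 → q.1 ∈ R := by
    rintro ⟨v, c⟩ ⟨⟨y, hy, -⟩, hg, -⟩ hq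
    exact ⟨⟨y, hy⟩, fun hT => hg ((hH v).2 hT c (by simp only at hq; omega))⟩
  have hx₀ : val x₀ ∈ M :=
    ⟨⟨x₀, rfl, le_rfl⟩, h.bad x₀, fun n hc => hk₁ _ n (hc.anti (by omega))⟩
  refine h.bad x₀ (good_of_sim (X := M) (val := Subtype.val)
    (nx := fun q q' => G.Step q.1 q'.1) ⟨fun _ _ hq => hq, ?_, ?_⟩ ?_ ⟨val x₀, hx₀⟩)
  · rintro ⟨q, hq⟩ hev
    left
    by_cases hc : q.2 < H + W
    · obtain ⟨q', hq', hst⟩ := hSE q hq.1 hev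
      exact ⟨⟨q', hq', fun hg => hq.2.1 (good_of_eve hev hst hg), hlow q q' hc hst⟩, hst⟩
    · push Not at hc
      obtain ⟨u, hu, huU, hun⟩ := (not_climb_step (hhigh q hq hc) hq.2.2).2.1 hev
      have hst : G.Step q (u, q.2 + G.w q.1 u) := ⟨hu, rfl⟩
      refine ⟨⟨(u, q.2 + G.w q.1 u), (hH u).1 huU _ ?_,
        fun hg => hq.2.1 (good_of_eve hev hst hg), ?_⟩, hst⟩
      · have := neg_le_of_abs_le (hW q.1 u)
        omega
      · intro n
        simp only
        rw [← sub_sub]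
        exact hun n
  · rintro ⟨q, hq⟩ hev q' hst
    by_cases hg : G.Good Lo Set.univ q'
    · exact .inl hg
    refine .inr ⟨⟨q', (hSA q hq.1 hev q' hst).resolve_left hg, hg, ?_⟩, hst, rfl⟩
    by_cases hc : q.2 < H + W
    · exact hlow q q' hc hst
    · push Not at hc
      have := (not_climb_step (hhigh q hq hc) hq.2.2).2.2 hev q'.1 hst.1
      rwa [sub_sub, ← hst.2] at this
  · intro s _
    exact ⟨a, h.mem, max K H, Set.mem_univ _, ⟨0, fun k _ => (hMb _ (s k).2).1⟩,
      fun N => ⟨N, le_rfl, (hMb _ (s N).2).2⟩⟩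

/-- Every configuration of a winning system is good. -/
theorem good_of_winning [Finite V] {G : GameGraph V} {Lo Hi : Set ℤ}
    (hup : ∀ a ∈ Lo, ∀ a', a ≤ a' → a' ∈ Lo) (hdn : ∀ b ∈ Hi, ∀ b', b' ≤ b → b' ∈ Hi)
    {X : Type} {val : X → V × ℤ} {nx : X → X → Prop} (hs : G.Sim ∅ val nx)
    (hw : ChainsWin Lo Hi val nx) (x : X) : G.Good Lo Hi (val x) := by
  by_contra hx
  have hnext : ∀ y, ∃ z, nx y z := by
    intro y
    by_cases hy : (val y).1 ∈ G.Eve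
    · rcases hs.eve y hy with h | ⟨q, hq, -⟩
      · exact h
      · exact hq.elim
    · obtain ⟨u, hu⟩ := G.succ (val y).1
      rcases hs.adam y hy (u, (val y).2 + G.w (val y).1 u) ⟨hu, rfl⟩ with hq | ⟨z, hz, -⟩
      · exact hq.elim
      · exact ⟨z, hz⟩
  obtain ⟨s, -, hsn⟩ := exists_chain hnext x
  obtain ⟨a₀, ha₀, b₀, hb₀, -⟩ := hw s hsn
  obtain ⟨Y, val', nx', a, htrap, ⟨y₀⟩⟩ := exists_trap hup ⟨a₀, ha₀⟩ hs hw x hx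
  by_cases hb : BddAbove Hi
  · exact htrap.false_of_max y₀ (Int.csSup_mem ⟨b₀, hb₀⟩ hb) fun b' hb' => le_csSup hb hb'
  · have hHi : Hi = Set.univ := by
      rw [not_bddAbove_iff] at hb
      refine Set.eq_univ_of_forall fun b' => ?_
      obtain ⟨b, hbH, hlt⟩ := hb b'
      exact hdn b hbH b' hlt.le
    subst hHi
    exact htrap.false_of_univ y₀

/-! ### Strategies and payoffs -/

/-- The integers above some point of `I`. -/
def loSet (I : Set ℝ) : Set ℤ := {a | ∃ x ∈ I, x ≤ (a : ℝ)}

/-- The integers below some point of `I`. -/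
def hiSet (I : Set ℝ) : Set ℤ := {b | ∃ y ∈ I, (b : ℝ) ≤ y}

theorem liminf_mem_iff {I : Set ℝ} (hI : I.OrdConnected) (c : ℕ → ℤ) :
    (∃ x : ℝ, x ∈ I ∧ liminf (fun k => ((c k : ℝ) : EReal)) atTop = (x : EReal)) ↔
      WinSeq (loSet I) (hiSet I) c := by
  constructor
  · rintro ⟨x, hx, hlim⟩
    refine ⟨⌈x⌉, ⟨x, hx, Int.le_ceil x⟩, ⌊x⌋, ⟨x, hx, Int.floor_le x⟩, ?_, ?_⟩
    · have h1 : (((⌈x⌉ - 1 : ℤ) : ℝ) : EReal) < liminf (fun k => ((c k : ℝ) : EReal)) atTop := by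
        rw [hlim, EReal.coe_lt_coe_iff]
        have := Int.ceil_lt_add_one x
        push_cast
        linarith
      obtain ⟨N, hN⟩ := eventually_atTop.1 (eventually_lt_of_lt_liminf h1)
      refine ⟨N, fun k hk => ?_⟩
      have := hN k hk
      rw [EReal.coe_lt_coe_iff] at this
      have : ⌈x⌉ - 1 < c k := by exact_mod_cast this
      omega
    · have h1 : liminf (fun k => ((c k : ℝ) : EReal)) atTop < (((⌊x⌋ + 1 : ℤ) : ℝ) : EReal) := by
        rw [hlim, EReal.coe_lt_coe_iff]
        have := Int.lt_floor_add_one x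
        push_cast
        linarith
      intro N
      obtain ⟨k, hk, hlt⟩ :=
        frequently_atTop.1 (frequently_lt_of_liminf_lt (by isBoundedDefault) h1) N
      refine ⟨k, hk, ?_⟩
      rw [EReal.coe_lt_coe_iff] at hlt
      have : c k < ⌊x⌋ + 1 := by exact_mod_cast hlt
      omega
  · rintro ⟨a, ⟨x, hx, hxa⟩, b, ⟨y, hy, hby⟩, ⟨N, hN⟩, hb⟩
    have h1 : ((a : ℝ) : EReal) ≤ liminf (fun k => ((c k : ℝ) : EReal)) atTop :=
      le_liminf_of_le (by isBoundedDefault) (eventually_atTop.2 ⟨N, fun k hk =>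
        EReal.coe_le_coe_iff.2 (by exact_mod_cast hN k hk)⟩)
    have h2 : liminf (fun k => ((c k : ℝ) : EReal)) atTop ≤ ((b : ℝ) : EReal) :=
      liminf_le_of_frequently_le (frequently_atTop.2 fun N => by
        obtain ⟨k, hk, hkb⟩ := hb N
        exact ⟨k, hk, EReal.coe_le_coe_iff.2 (by exact_mod_cast hkb)⟩) (by isBoundedDefault)
    generalize liminf (fun k => ((c k : ℝ) : EReal)) atTop = L at h1 h2
    induction L with
    | bot => simp at h1
    | top => simp at h2
    | coe L =>
      rw [EReal.coe_le_coe_iff] at h1 h2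
      exact ⟨L, hI.out hx hy ⟨hxa.trans h1, h2.trans hby⟩, rfl⟩

theorem partialSum_congr (G : GameGraph V) {π π' : ℕ → V} {n : ℕ}
    (h : ∀ i, i ≤ n → π i = π' i) : G.partialSum π n = G.partialSum π' n := by
  refine Finset.sum_congr rfl fun i hi => ?_
  rw [Finset.mem_range] at hi
  rw [h i (by omega), h (i + 1) (by omega)]

theorem prefixList_congr {π π' : ℕ → V} {n : ℕ} (h : ∀ i, i ≤ n → π i = π' i) :
    prefixList π n = prefixList π' n := by
  unfold prefixList
  congr 1
  funext j
  exact h j (by omega)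

theorem exists_prefixList_eq (π : ℕ → V) (n : ℕ) : ∃ l, prefixList π n = l ++ [π n] := by
  refine ⟨List.ofFn (fun j : Fin n => π j), ?_⟩
  unfold prefixList
  rw [List.ofFn_succ_last]
  simp

/-- The finite histories consistent with `σ`: a pair `(n, π)` stands for `π 0, …, π n`, the later
values of `π` being irrelevant. -/
def IsHist (G : GameGraph V) (σ : List V → V) (z : ℕ × (ℕ → V)) : Prop :=
  z.2 0 = G.init ∧ ∀ i, i < z.1 → G.E (z.2 i) (z.2 (i + 1)) ∧
    (z.2 i ∈ G.Eve → z.2 (i + 1) = σ (prefixList z.2 i))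

theorem IsHist.extend {G : GameGraph V} {σ : List V → V} {z : ℕ × (ℕ → V)}
    (h : G.IsHist σ z) {u : V} (hu : G.E (z.2 z.1) u)
    (hσ : z.2 z.1 ∈ G.Eve → u = σ (prefixList z.2 z.1)) :
    ∃ z', G.IsHist σ z' ∧ z'.1 = z.1 + 1 ∧ (∀ i, i ≤ z.1 → z'.2 i = z.2 i) ∧
      z'.2 z'.1 = u := by
  obtain ⟨n, π⟩ := z
  simp only at hu hσ
  have hag : ∀ i, i ≤ n → Function.update π (n + 1) u i = π i := fun i hi =>
    Function.update_of_ne (by omega) _ _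
  refine ⟨(n + 1, Function.update π (n + 1) u), ⟨?_, fun i hi => ?_⟩, rfl, hag, by simp⟩
  · simp only; rw [hag 0 (by omega)]; exact h.1
  · simp only at hi ⊢
    rw [hag i (by omega), prefixList_congr (fun j hj => hag j (by omega))]
    rcases Nat.lt_succ_iff_lt_or_eq.1 hi with hlt | rfl
    · rw [hag (i + 1) (by omega)]
      exact h.2 i hlt
    · rw [Function.update_self]
      exact ⟨hu, hσ⟩

theorem good_init_of_eveWins [Finite V] {G : GameGraph V} {I : Set ℝ} (hI : I.OrdConnected)
    (h : G.EveWins (fun π => ∃ x : ℝ, x ∈ I ∧ G.totalPayoff π = (x : EReal))) :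
    G.Good (loSet I) (hiSet I) (G.init, 0) := by
  obtain ⟨σ, hleg, hwin⟩ := h
  let X := {z // G.IsHist σ z}
  let val : X → V × ℤ := fun z => (z.1.2 z.1.1, G.partialSum z.1.2 z.1.1)
  let nx : X → X → Prop := fun z z' => z'.1.1 = z.1.1 + 1 ∧ ∀ i, i ≤ z.1.1 → z'.1.2 i = z.1.2 i
  have hext : ∀ (z : X) (u : V), G.E (z.1.2 z.1.1) u →
      (z.1.2 z.1.1 ∈ G.Eve → u = σ (prefixList z.1.2 z.1.1)) →
      ∃ z', nx z z' ∧ (val z').1 = u := by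
    intro z u hu hσ
    obtain ⟨z', h1, h2, h3, h4⟩ := z.2.extend hu hσ
    exact ⟨⟨z', h1⟩, ⟨h2, h3⟩, h4⟩
  have hstep : ∀ z z', nx z z' → G.Step (val z) (val z') := by
    rintro z z' ⟨h1, h2⟩
    have hE := (z'.2.2 z.1.1 (by omega)).1
    refine ⟨?_, ?_⟩
    · simp only [val]
      rw [h1, ← h2 _ le_rfl]
      exact hE
    · simp only [val]
      rw [h1, ← h2 _ le_rfl, partialSum, Finset.sum_range_succ]
      congr 1
      exact G.partialSum_congr h2
  have hsim : G.Sim ∅ val nx := by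
    refine ⟨hstep, fun z hz => .inl ?_, fun z hz q hq => .inr ?_⟩
    · obtain ⟨l, hl⟩ := exists_prefixList_eq z.1.2 z.1.1
      obtain ⟨z', hz', -⟩ := hext z (σ (prefixList z.1.2 z.1.1))
        (by rw [hl]; exact hleg l _ hz) (fun _ => rfl)
      exact ⟨z', hz'⟩
    · obtain ⟨z', hz', hv⟩ := hext z q.1 hq.1 (fun h' => (hz h').elim)
      refine ⟨z', hz', Prod.ext hv ?_⟩
      rw [(hstep _ _ hz').2, hq.2, hv]
  have hch : ChainsWin (loSet I) (hiSet I) val nx := by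
    intro s hs
    have hn : ∀ i, (s i).1.1 = (s 0).1.1 + i := by
      intro i
      induction i with
      | zero => rfl
      | succ i ih => rw [(hs i).1, ih]; rfl
    have hag : ∀ d i j, j ≤ (s i).1.1 → (s (i + d)).1.2 j = (s i).1.2 j := by
      intro d i j hj
      induction d with
      | zero => rfl
      | succ d ih =>
        rw [← ih]
        exact (hs (i + d)).2 j (by have := hn i; have := hn (i + d); omega)
    -- The limit play; the history `s j` has length at least `j`, so it determines `π j`.
    let π : ℕ → V := fun j => (s j).1.2 j
    have hπ : ∀ i j, j ≤ (s i).1.1 → π j = (s i).1.2 j := by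
      intro i j hj
      rcases le_total i j with hij | hij
      · obtain ⟨d, rfl⟩ := Nat.exists_eq_add_of_le hij
        exact hag d i _ hj
      · obtain ⟨d, rfl⟩ := Nat.exists_eq_add_of_le hij
        exact (hag d j j (by have := hn j; omega)).symm
    have hloc : ∀ i, G.E (π i) (π (i + 1)) ∧
        (π i ∈ G.Eve → π (i + 1) = σ (prefixList π i)) := by
      intro i
      have h1 := hn (i + 1)
      rw [prefixList_congr (fun j hj => hπ (i + 1) j (by omega)), hπ (i + 1) i (by omega)]
      exact (s (i + 1)).2.2 i (by omega)
    have hw := hwin π ⟨(s 0).2.1, fun i => (hloc i).1⟩ (fun i => (hloc i).2)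
    have hw' := ((liminf_mem_iff hI _).1 hw).tail (s 0).1.1
    have hfun : (fun i => (val (s i)).2) = fun k => G.partialSum π ((s 0).1.1 + k) := by
      funext i
      simp only [val]
      rw [← hn i]
      exact G.partialSum_congr (fun j hj => (hπ i j hj).symm)
    rw [hfun]
    exact hw'
  have := good_of_winning (G := G) (Lo := loSet I) (Hi := hiSet I)
    (fun a ⟨x, hx, hxa⟩ a' haa' => ⟨x, hx, hxa.trans (by exact_mod_cast haa')⟩)
    (fun b ⟨y, hy, hby⟩ b' hbb' => ⟨y, hy, le_trans (by exact_mod_cast hbb') hby⟩)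
    hsim hch ⟨(0, fun _ => G.init), rfl, fun i hi => (Nat.not_lt_zero i hi).elim⟩
  simpa [val, partialSum] using this

/-- A finite winning system yields a finite-state machine: the memory is the state of the system
at the previous vertex, or `none` before the first move. -/
theorem eveWinsFM_of_good {G : GameGraph V} {I : Set ℝ} (hI : I.OrdConnected)
    (h : G.Good (loSet I) (hiSet I) (G.init, 0)) :
    G.EveWinsFM (fun π => ∃ x : ℝ, x ∈ I ∧ G.totalPayoff π = (x : EReal)) := by
  classical
  obtain ⟨X, hX, val, nx, hs, hw, x₀, hx₀⟩ := h
  have hnext : ∀ x, ∃ y, (val x).1 ∈ G.Eve → nx x y := by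
    intro x
    by_cases hx : (val x).1 ∈ G.Eve
    · rcases hs.eve x hx with ⟨y, hy⟩ | ⟨q, hq, -⟩
      · exact ⟨y, fun _ => hy⟩
      · exact hq.elim
    · exact ⟨x, fun h' => (hx h').elim⟩
  choose e he using hnext
  have hchild : ∀ x u, ∃ y, G.E (val x).1 u → (val x).1 ∉ G.Eve → nx x y ∧ (val y).1 = u := by
    intro x u
    by_cases hx : G.E (val x).1 u ∧ (val x).1 ∉ G.Eve
    · rcases hs.adam x hx.2 (u, (val x).2 + G.w (val x).1 u) ⟨hx.1, rfl⟩ with hq | ⟨y, hy, hyq⟩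
      · exact hq.elim
      · exact ⟨y, fun _ _ => ⟨hy, by rw [hyq]⟩⟩
    · exact ⟨x, fun h1 h2 => (hx ⟨h1, h2⟩).elim⟩
  choose ad had using hchild
  choose sc hsc using G.succ
  -- The state at the current vertex, computed from the state at the previous one.
  let cur : Option X → V → X := fun m v =>
    m.elim x₀ (fun x => if (val x).1 ∈ G.Eve then e x else ad x v)
  let out : Option X → V → V := fun m v =>
    if G.E v (val (e (cur m v))).1 then (val (e (cur m v))).1 else sc v
  refine ⟨Option X, Fintype.ofFinite _, none, fun m v => some (cur m v), out, ?_, ?_⟩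
  · intro m v _
    simp only [out]
    split_ifs with hE
    · exact hE
    · exact hsc v
  · intro π hπ hcons
    let mr := memRun (fun m v => some (cur m v)) none π
    let s : ℕ → X := fun i => cur (mr i) (π i)
    have hmr : ∀ i, mr (i + 1) = some (s i) := fun i => rfl
    have hsucc : ∀ i, s (i + 1) =
        if (val (s i)).1 ∈ G.Eve then e (s i) else ad (s i) (π (i + 1)) := fun i => rfl
    have hadv : ∀ i, (val (s i)).1 = π i →
        nx (s i) (s (i + 1)) ∧ (val (s (i + 1))).1 = π (i + 1) := by
      intro i hi
      rw [hsucc]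
      by_cases hev : (val (s i)).1 ∈ G.Eve
      · rw [if_pos hev]
        refine ⟨he _ hev, ?_⟩
        have h1 : π (i + 1) = out (mr i) (π i) := hcons i (hi ▸ hev)
        have h2 : G.E (π i) (val (e (cur (mr i) (π i)))).1 := by
          have := (hs.step _ _ (he _ hev)).1
          rw [hi] at this
          exact this
        rw [h1]
        simp only [out]
        rw [if_pos h2]
      · rw [if_neg hev]
        exact had _ _ (by rw [hi]; exact hπ.2 i) hev
    have hv : ∀ i, (val (s i)).1 = π i := by
      intro i
      induction i with
      | zero =>
        change (val x₀).1 = π 0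
        rw [hx₀, hπ.1]
      | succ i ih => exact (hadv i ih).2
    have hsum : ∀ i, (val (s i)).2 = G.partialSum π i := by
      intro i
      induction i with
      | zero =>
        change (val x₀).2 = _
        rw [hx₀]
        simp [partialSum]
      | succ i ih =>
        rw [(hs.step _ _ (hadv i (hv i)).1).2, ih, hv, hv, partialSum, partialSum,
          Finset.sum_range_succ]
    have hwin := hw s (fun i => (hadv i (hv i)).1)
    simp only [hsum] at hwin
    exact (liminf_mem_iff hI _).2 hwin

end GameGraph

/-- Let `(G, I)` be a single-interval total-sum game, where
`I ⊆ ℝ` is a (possibly unbounded) interval. If Eve has a winning strategy (ensuring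
that `Total(π)` is (finite and) in `I` for every consistent play), then she has a
finite-memory winning strategy. -/
theorem stmt19 {V : Type} [Fintype V] (G : GameGraph V)
    (I : Set ℝ) (hconn : I.OrdConnected) :
    G.EveWins (fun π => ∃ x : ℝ, x ∈ I ∧ G.totalPayoff π = (x : EReal)) →
      G.EveWinsFM (fun π => ∃ x : ℝ, x ∈ I ∧ G.totalPayoff π = (x : EReal)) := by
  intro h
  exact GameGraph.eveWinsFM_of_good hconn (GameGraph.good_init_of_eveWins hconn h)
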